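/- arXiv:1811.03843 — 2 statements merged into one kernel-verified Lean document; each statement's English description precedes it below -/
import Mathlib

section
/- For every integer k ≥ 1, the relations (ad C)^k(A) = (1−m)^k·C^k A and (1−m)^{k−1}(1 − m^{k+1})·C^{k+1} = (1−m)^{k−1}(1 − m^k)·b·C^k − m^k·((ad B) ∘ (ad C)^k)(A) hold in R (the latter is Lemma 4.4 with denominators cleared). -/
noncomputable section

open FreeAlgebra

attribute [local instance 100] LieRing.ofAssociativeRing

/-- The defining relation `A*B = m • (B*A) + b·1` on the free algebra `F⟨A,B⟩`
(the free unital associative algebra on two generators `A = ι F 0`, `B = ι F 1`). -/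
def twistRel (F : Type*) [Field F] (m b : F) :
    FreeAlgebra F (Fin 2) → FreeAlgebra F (Fin 2) → Prop :=
  fun p q => p = ι F 0 * ι F 1 ∧
    q = m • (ι F 1 * ι F 0) + algebraMap F (FreeAlgebra F (Fin 2)) b

/-- `R = F⟨A,B⟩ / (AB − m·BA − b·1)`. -/
abbrev TwistAlg (F : Type*) [Field F] (m b : F) := RingQuot (twistRel F m b)

/-- The image of the generator `A` in `R`. -/
def genA (F : Type*) [Field F] (m b : F) : TwistAlg F m b :=
  RingQuot.mkAlgHom F (twistRel F m b) (ι F 0)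

/-- The image of the generator `B` in `R`. -/
def genB (F : Type*) [Field F] (m b : F) : TwistAlg F m b :=
  RingQuot.mkAlgHom F (twistRel F m b) (ι F 1)

/-- `C := A*B − B*A` in `R`. -/
def genC (F : Type*) [Field F] (m b : F) : TwistAlg F m b :=
  genA F m b * genB F m b - genB F m b * genA F m b
theorem aux_rel (F : Type*) [Field F] (m b : F) :
    genA F m b * genB F m b = m • (genB F m b * genA F m b) + b • (1 : TwistAlg F m b) := by
  have h := RingQuot.mkAlgHom_rel F (s := twistRel F m b) (x := ι F 0 * ι F 1)
    (y := m • (ι F 1 * ι F 0) + algebraMap F (FreeAlgebra F (Fin 2)) b) ⟨rfl, rfl⟩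
  rw [map_mul, map_add, map_smul, map_mul, AlgHom.commutes, Algebra.algebraMap_eq_smul_one] at h
  exact h

theorem aux_gen {F R : Type*} [Field F] [Ring R] [Algebra F R] (m b : F) (A B C : R)
    (h : A * B = m • (B * A) + b • (1 : R)) (hC : C = A * B - B * A) (k : ℕ) :
    ((LieAlgebra.ad F R C) ^ (k + 1)) A = (1 - m) ^ (k + 1) • (C ^ (k + 1) * A) ∧
    ((1 - m) ^ k * (1 - m ^ (k + 2))) • C ^ (k + 2) =
      ((1 - m) ^ k * (1 - m ^ (k + 1)) * b) • C ^ (k + 1) -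
        m ^ (k + 1) • (LieAlgebra.ad F R B (((LieAlgebra.ad F R C) ^ (k + 1)) A)) := by
  have hC' : C = (m - 1) • (B * A) + b • (1 : R) := by
    rw [hC, h]; module
  have hAC : A * C = m • (C * A) := by
    have e1 : A * C = (m - 1) • (A * B * A) + b • A := by
      rw [hC']; simp [mul_add, mul_assoc]
    rw [e1, hC', h]
    simp only [add_mul, smul_mul_assoc, one_mul]
    module
  have hCB : C * B = m • (B * C) := by
    have e1 : C * B = (m - 1) • (B * (A * B)) + b • B := by
      rw [hC']; simp [add_mul, mul_assoc]
    rw [e1, hC', h]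
    simp only [mul_add, mul_smul_comm, mul_one]
    module
  have hCkB : ∀ n : ℕ, C ^ n * B = m ^ n • (B * C ^ n) := by
    intro n
    induction n with
    | zero => simp
    | succ n ih =>
      rw [pow_succ, mul_assoc, hCB, mul_smul_comm, ← mul_assoc, ih, smul_mul_assoc, smul_smul,
        mul_assoc, ← pow_succ, ← pow_succ' m]
  have had : ∀ n : ℕ, ((LieAlgebra.ad F R C) ^ n) A = (1 - m) ^ n • (C ^ n * A) := by
    intro n
    induction n with
    | zero => simp
    | succ n ih =>
      rw [pow_succ', Module.End.mul_apply, ih, map_smul, LieAlgebra.ad_apply, Ring.lie_def,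
        mul_assoc (C ^ n), hAC, mul_smul_comm, ← mul_assoc, ← mul_assoc, ← pow_succ',
        ← pow_succ]
      module
  refine ⟨had _, ?_⟩
  rw [had, map_smul, LieAlgebra.ad_apply, Ring.lie_def]
  have e2 : (1 - m) • (B * A) = b • (1 : R) - C := by rw [hC']; module
  have e3 : (1 - m) • (A * B) = b • (1 : R) - m • C := by rw [hC', h]; module
  have key : (1 - m) • m ^ (k + 1) • (B * (C ^ (k + 1) * A) - C ^ (k + 1) * A * B) =
      ((1 - m ^ (k + 1)) * b) • C ^ (k + 1) - (1 - m ^ (k + 2)) • C ^ (k + 2) := by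
    have e4 : (1 - m) • m ^ (k + 1) • (B * (C ^ (k + 1) * A) - C ^ (k + 1) * A * B) =
        C ^ (k + 1) * ((1 - m) • (B * A)) - m ^ (k + 1) • (C ^ (k + 1) * ((1 - m) • (A * B))) := by
      rw [mul_smul_comm, ← mul_assoc (C ^ (k + 1)) B A, hCkB, mul_smul_comm, smul_mul_assoc,
        mul_assoc B, mul_assoc (C ^ (k + 1)) A B]
      module
    rw [e4, e2, e3, mul_sub, mul_sub, mul_smul_comm, mul_smul_comm, mul_one, ← pow_succ]
    module
  have e5 : m ^ (k + 1) • (1 - m) ^ (k + 1) • (B * (C ^ (k + 1) * A) - C ^ (k + 1) * A * B) =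
      (1 - m) ^ k • ((1 - m) • m ^ (k + 1) • (B * (C ^ (k + 1) * A) - C ^ (k + 1) * A * B)) := by
    module
  rw [e5, key]
  module

theorem stmt18 (F : Type*) [Field F] (m b : F) (hm0 : m ≠ 0) (hm1 : m ≠ 1)
    (k : ℕ) (hk : 1 ≤ k) :
    ((LieAlgebra.ad F (TwistAlg F m b) (genC F m b)) ^ k) (genA F m b) =
      (1 - m) ^ k • (genC F m b ^ k * genA F m b) ∧
    ((1 - m) ^ (k - 1) * (1 - m ^ (k + 1))) • genC F m b ^ (k + 1) =
      ((1 - m) ^ (k - 1) * (1 - m ^ k) * b) • genC F m b ^ k -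
        m ^ k • (LieAlgebra.ad F (TwistAlg F m b) (genB F m b)
          (((LieAlgebra.ad F (TwistAlg F m b) (genC F m b)) ^ k) (genA F m b))) := by
  obtain ⟨n, rfl⟩ : ∃ n, k = n + 1 := ⟨k - 1, by omega⟩
  exact aux_gen m b _ _ _ (aux_rel F m b) rfl n
end
end

section
/- For all integers k, l ≥ 1, the relations (ad A)^l(C^k) = (m^k − 1)^l·C^k A^l and (ad B)^l(C^k) = (1 − m^k)^l·B^l C^k hold in R. -/
noncomputable section

open FreeAlgebra

attribute [local instance 100] LieRing.ofAssociativeRing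

theorem rel_AB (F : Type*) [Field F] (m b : F) :
    genA F m b * genB F m b = m • (genB F m b * genA F m b) + algebraMap F _ b := by
  have h := RingQuot.mkAlgHom_rel F (s := twistRel F m b) ⟨rfl, rfl⟩
  simpa [genA, genB] using h

theorem rel_AC (F : Type*) [Field F] (m b : F) :
    genA F m b * genC F m b = m • (genC F m b * genA F m b) := by
  have h := rel_AB F m b
  unfold genC
  rw [mul_sub, sub_mul, ← mul_assoc (genA F m b) (genB F m b), h, mul_add, mul_smul_comm, ← mul_assoc,
    h, ← Algebra.commutes]
  simp only [add_mul, smul_mul_assoc, smul_add, smul_sub, Algebra.algebraMap_eq_smul_one, one_mul,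
    mul_assoc]
  abel

theorem rel_CB (F : Type*) [Field F] (m b : F) :
    genC F m b * genB F m b = m • (genB F m b * genC F m b) := by
  have h := rel_AB F m b
  unfold genC
  rw [mul_sub, sub_mul, mul_assoc (genB F m b) (genA F m b), h, add_mul, smul_mul_assoc, mul_assoc,
    h, Algebra.commutes]
  simp only [mul_add, mul_smul_comm, smul_add, smul_sub, Algebra.algebraMap_eq_smul_one, mul_one,
    mul_assoc]
  abel

theorem rel_ACk (F : Type*) [Field F] (m b : F) (k : ℕ) :
    genA F m b * genC F m b ^ k = m ^ k • (genC F m b ^ k * genA F m b) := by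
  induction k with
  | zero => simp
  | succ k ih =>
    rw [pow_succ (genC F m b), ← mul_assoc, ih, smul_mul_assoc, mul_assoc, rel_AC, mul_smul_comm,
      smul_smul, ← pow_succ, mul_assoc]

theorem rel_CkB (F : Type*) [Field F] (m b : F) (k : ℕ) :
    genC F m b ^ k * genB F m b = m ^ k • (genB F m b * genC F m b ^ k) := by
  induction k with
  | zero => simp
  | succ k ih =>
    rw [pow_succ' (genC F m b), mul_assoc, ih, mul_smul_comm, ← mul_assoc, rel_CB, smul_mul_assoc,
      smul_smul, ← pow_succ, mul_assoc]

theorem stmt19 (F : Type*) [Field F] (m b : F) (hm0 : m ≠ 0) (hm1 : m ≠ 1)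
    (k l : ℕ) (hk : 1 ≤ k) (hl : 1 ≤ l) :
    ((LieAlgebra.ad F (TwistAlg F m b) (genA F m b)) ^ l) (genC F m b ^ k) =
      (m ^ k - 1) ^ l • (genC F m b ^ k * genA F m b ^ l) ∧
    ((LieAlgebra.ad F (TwistAlg F m b) (genB F m b)) ^ l) (genC F m b ^ k) =
      (1 - m ^ k) ^ l • (genB F m b ^ l * genC F m b ^ k) := by
  clear hk hl hm0 hm1
  constructor
  · induction l with
    | zero => simp
    | succ l ih =>
      rw [pow_succ', Module.End.mul_apply, ih, map_smul, LieAlgebra.ad_apply, Ring.lie_def,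
        ← mul_assoc, rel_ACk, smul_mul_assoc, mul_assoc, mul_assoc, ← pow_succ', ← pow_succ,
        pow_succ (m ^ k - 1), mul_smul, sub_smul (m ^ k) 1, one_smul]
  · induction l with
    | zero => simp
    | succ l ih =>
      rw [pow_succ', Module.End.mul_apply, ih, map_smul, LieAlgebra.ad_apply, Ring.lie_def,
        mul_assoc (genB F m b ^ l), rel_CkB, mul_smul_comm, ← mul_assoc, ← mul_assoc, ← pow_succ',
        ← pow_succ, pow_succ (1 - m ^ k), mul_smul, sub_smul 1 (m ^ k), one_smul]
end
end
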